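/- Let K be a trace class operator on a separable Hilbert space such that I + K is invertible, and let P be an orthogonal projection with Q = I − P. Then det(P(I + K)P) = det(I + K) · det(Q (I + K)^{−1} Q), where the determinants of P(I+K)P and Q(I+K)^{−1}Q are taken on the ranges of P and Q respectively. -/

import Mathlib

open MeasureTheory
open scoped InnerProductSpace Classical

variable {H : Type*} [NormedAddCommGroup H] [InnerProductSpace ℂ H] [CompleteSpace H]

/-- A nuclear decomposition of an operator `K` as `K g = ∑ₙ ⟪vₙ, g⟫ uₙ` with
`∑ₙ ‖uₙ‖‖vₙ‖ < ∞`. -/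
def TraceDecomp (K : H →L[ℂ] H) (u v : ℕ → H) : Prop :=
  (∀ g : H, HasSum (fun n => (⟪v n, g⟫_ℂ) • u n) (K g)) ∧
    Summable (fun n => ‖u n‖ * ‖v n‖)

/-- `K` is trace class. -/
def IsTraceClass (K : H →L[ℂ] H) : Prop := ∃ u v : ℕ → H, TraceDecomp K u v

/-- Trace norm: the infimum of `∑ₙ ‖uₙ‖‖vₙ‖` over nuclear decompositions. -/
noncomputable def traceNorm (K : H →L[ℂ] H) : ℝ :=
  sInf {M : ℝ | ∃ u v : ℕ → H, TraceDecomp K u v ∧ (∑' n, ‖u n‖ * ‖v n‖) = M}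

/-- The trace of a trace class operator (via a choice of nuclear decomposition;
for trace class operators the value does not depend on the decomposition). -/
noncomputable def opTrace (K : H →L[ℂ] H) : ℂ :=
  if h : IsTraceClass K then ∑' n, ⟪h.choose_spec.choose n, h.choose n⟫_ℂ else 0

/-- The `m`-th Plemelj–Smithies coefficient: determinant of the `m × m` matrix with
entries `σ_{i-j+1} = Tr(K^{i-j+1})` below and on the diagonal, `m-1-i` on the
superdiagonal, `0` above. -/
noncomputable def plemeljCoeff (K : H →L[ℂ] H) (m : ℕ) : ℂ :=
  Matrix.det (Matrix.of fun i j : Fin m =>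
    if (j : ℕ) = (i : ℕ) + 1 then ((m - 1 - (i : ℕ) : ℕ) : ℂ)
    else if (j : ℕ) ≤ (i : ℕ) then opTrace (K ^ ((i : ℕ) - (j : ℕ) + 1)) else 0)

/-- The Fredholm determinant `det(I + K)`, via the Plemelj–Smithies formula. -/
noncomputable def fredholmDet (K : H →L[ℂ] H) : ℂ :=
  ∑' m : ℕ, plemeljCoeff K m / (Nat.factorial m : ℂ)

/-!
With `R = (1 + K)⁻¹ - 1` and `Q = 1 - P` one has `(1 + K) (1 + R Q) = 1 + K P`, and since the
determinant does not change under `X Y ↦ Y X`, it takes the same values at `P K P` and `K P`, and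
at `Q R Q` and `R Q`. So the identity follows from multiplicativity.

On a finite rank operator `A = ∑ i, ⟪a i, ·⟫ • w i`, Newton's identities turn the Plemelj–Smithies
series into `det (1 + G)`, where `G` is the matrix of the `⟪a i, w j⟫`. If `B = ∑ i, ⟪b i, ·⟫ • w i`
uses the same vectors `w i`, then the matrix belonging to `A + B + A B = (1 + A) (1 + B) - 1` is
`(1 + G_A) (1 + G_B) - 1`. Any two trace class operators are trace norm limits of such pairs, and
Hadamard's inequality for the minors of `G` dominates the series uniformly, so the determinant is
continuous in trace norm and multiplicativity passes to the limit.
-/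

section Plemelj

variable {R : Type*} [CommRing R]

/-- The matrix of the Plemelj–Smithies formula for power sums `σ 1, σ 2, …`; its determinant is
`m!` times the `m`-th elementary symmetric function. -/
def plemeljMatrix (σ : ℕ → R) (m : ℕ) : Matrix (Fin m) (Fin m) R :=
  Matrix.of fun i j =>
    if (j : ℕ) = (i : ℕ) + 1 then ((m - 1 - (i : ℕ) : ℕ) : R)
    else if (j : ℕ) ≤ (i : ℕ) then σ ((i : ℕ) - (j : ℕ) + 1) else 0

lemma plemeljMatrix_congr {σ τ : ℕ → R} (h : ∀ k, σ (k + 1) = τ (k + 1)) (m : ℕ) :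
    plemeljMatrix σ m = plemeljMatrix τ m := by
  simp only [plemeljMatrix, h]

lemma tendsto_det_plemeljMatrix [TopologicalSpace R] [IsTopologicalRing R] {α : Type*}
    {l : Filter α} {σ : α → ℕ → R} {τ : ℕ → R}
    (h : ∀ k, Filter.Tendsto (fun x => σ x (k + 1)) l (nhds (τ (k + 1)))) (m : ℕ) :
    Filter.Tendsto (fun x => (plemeljMatrix (σ x) m).det) l (nhds (plemeljMatrix τ m).det) := by
  refine (continuous_id.matrix_det.tendsto (plemeljMatrix τ m)).comp ?_
  refine tendsto_pi_nhds.2 fun i => tendsto_pi_nhds.2 fun j => ?_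
  simp only [plemeljMatrix, Matrix.of_apply]
  split_ifs
  exacts [tendsto_const_nhds, h _, tendsto_const_nhds]

/-- Newton's identities, satisfied by power sums `σ` and elementary symmetric functions `e` of the
same variables; they leave `e 0` free and do not involve `σ 0`. -/
def NewtonIdentities (σ e : ℕ → R) : Prop :=
  ∀ n : ℕ, (n + 1) * e (n + 1) =
    ∑ k ∈ Finset.range (n + 1), (-1) ^ k * e (n - k) * σ (k + 1)

lemma NewtonIdentities.sum_neg_one_pow_sub {σ e : ℕ → R} (newton : NewtonIdentities σ e) (n : ℕ) :
    ∑ k ∈ Finset.range (n + 1), (-1) ^ (n - k) * e (n - k) * σ (k + 1) =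
      (-1) ^ n * ((n + 1) * e (n + 1)) := by
  rw [newton n, Finset.mul_sum]
  refine Finset.sum_congr rfl fun k hk => ?_
  obtain ⟨d, rfl⟩ := Nat.exists_eq_add_of_le (Finset.mem_range_succ_iff.1 hk)
  have sign : (-1 : R) ^ (k * 2) = 1 := (even_two.mul_left k).neg_one_pow
  rw [Nat.add_sub_cancel_left]
  linear_combination (-(-1) ^ d * e d * σ (k + 1)) * sign

open Matrix in
lemma vecMul_plemeljMatrix {σ e : ℕ → R} (newton : NewtonIdentities σ e) (m : ℕ) :
    (fun i : Fin (m + 1) => (-1) ^ (m - i : ℕ) * e (m - i)) ᵥ* plemeljMatrix σ (m + 1) =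
      Pi.single 0 ((-1) ^ m * ((m + 1) * e (m + 1))) := by
  ext j
  simp only [vecMul, dotProduct, plemeljMatrix, of_apply]
  rw [Fin.sum_univ_eq_sum_range (fun i => (-1) ^ (m - i) * e (m - i) *
    if (j : ℕ) = i + 1 then ((m + 1 - 1 - i : ℕ) : R)
    else if (j : ℕ) ≤ i then σ (i - j + 1) else 0) (m + 1)]
  cases j using Fin.cases with
  | zero => simpa using newton.sum_neg_one_pow_sub m
  | succ j =>
    obtain ⟨n, hm⟩ := Nat.exists_eq_add_of_lt j.isLt
    have above_superdiagonal : ∀ i ∈ Finset.range j, (-1) ^ (m - i) * e (m - i) *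
        (if (j : ℕ) + 1 = i + 1 then ((m + 1 - 1 - i : ℕ) : R)
        else if (j : ℕ) + 1 ≤ i then σ (i - (j + 1) + 1) else 0) = 0 := fun i hi => by
      have := Finset.mem_range.1 hi
      rw [if_neg (by lia), if_neg (by lia), mul_zero]
    have below_superdiagonal : ∀ k ∈ Finset.range (n + 1), (-1) ^ (m - (j + 1 + k)) *
        e (m - (j + 1 + k)) * (if (j : ℕ) + 1 = j + 1 + k + 1 then
          ((m + 1 - 1 - (j + 1 + k) : ℕ) : R)
        else if (j : ℕ) + 1 ≤ j + 1 + k then σ (j + 1 + k - (j + 1) + 1) else 0) =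
        (-1) ^ (n - k) * e (n - k) * σ (k + 1) := fun k _ => by
      rw [if_neg (by lia), if_pos (by lia), Nat.add_sub_cancel_left,
        show m - (j + 1 + k) = n - k by lia]
    rw [Pi.single_eq_of_ne (Fin.succ_ne_zero j), Fin.val_succ,
      show m + 1 = (j + 1) + (n + 1) by lia, Finset.sum_range_add,
      ← show m + 1 = (j + 1) + (n + 1) by lia, Finset.sum_range_succ,
      Finset.sum_eq_zero above_superdiagonal,
      Finset.sum_congr rfl below_superdiagonal, newton.sum_neg_one_pow_sub, if_pos rfl,
      Nat.add_sub_cancel, show m - j = n + 1 by lia]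
    push_cast
    ring

lemma det_plemeljMatrix {σ e : ℕ → R} (e_zero : e 0 = 1) (newton : NewtonIdentities σ e) (m : ℕ) :
    (plemeljMatrix σ m).det = m.factorial * e m := by
  cases m with
  | zero => simp [e_zero]
  | succ m =>
    set T := plemeljMatrix σ (m + 1) with hT
    have minor_apply (i j : Fin m) : T.submatrix (Fin.last m).succAbove (Fin.succAbove 0) i j =
        if (j : ℕ) = i then ((m - i : ℕ) : R)
        else if (j : ℕ) + 1 ≤ i then σ (i - (j + 1) + 1) else 0 := by
      simp [hT, plemeljMatrix]
    have minor_det : (T.submatrix (Fin.last m).succAbove (Fin.succAbove 0)).det = m.factorial := by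
      rw [Matrix.det_of_isLowerTriangular]
      · simp only [minor_apply, if_true]
        rw [Fin.prod_univ_eq_prod_range (fun i => ((m - i : ℕ) : R)), ← Nat.cast_prod,
          ← Nat.descFactorial_eq_prod_range, Nat.descFactorial_self]
      · intro i j hij
        have : (i : ℕ) < j := hij
        rw [minor_apply, if_neg (by lia), if_neg (by lia)]
    -- Cramer's rule for the last entry `1` of the vector in `vecMul_plemeljMatrix`.
    have cramer := congrFun (congrArg (Matrix.vecMul · T.adjugate)
      (vecMul_plemeljMatrix newton m)) (Fin.last m)
    simp only [Matrix.vecMul_vecMul, ← hT, Matrix.mul_adjugate, Matrix.vecMul_smul,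
      Matrix.vecMul_one, Matrix.single_vecMul, Pi.smul_apply, smul_eq_mul, Matrix.row_apply,
      Matrix.adjugate_fin_succ_eq_det_submatrix, minor_det, Fin.val_last, Nat.sub_self, e_zero]
      at cramer
    have sign : (-1 : R) ^ (m * 2) = 1 := (even_two.mul_left m).neg_one_pow
    simp only [pow_zero, mul_one, Fin.val_zero, add_zero] at cramer
    rw [cramer, Nat.factorial_succ]
    push_cast
    linear_combination ((m + 1) * e (m + 1) * m.factorial) * sign

end Plemelj

section Jacobi
open Polynomial

variable {R n : Type*} [CommRing R] [Fintype n] [DecidableEq n]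

lemma derivative_det (M : Matrix n n R[X]) :
    derivative M.det = (M.adjugate * M.map derivative).trace := by
  have trace_eq : (M.adjugate * M.map derivative).trace =
      ∑ i, (M.updateCol i (fun j => derivative (M j i))).det :=
    Finset.sum_congr rfl fun i _ => by
      rw [← Matrix.cramer_apply, Matrix.cramer_eq_adjugate_mulVec]; rfl
  simp only [trace_eq, Matrix.det_apply', derivative_sum]
  rw [Finset.sum_comm]
  refine Finset.sum_congr rfl fun s _ => ?_
  rw [derivative_mul, derivative_intCast, zero_mul, zero_add, derivative_prod_finset,
    Finset.mul_sum]
  refine Finset.sum_congr rfl fun i _ => ?_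
  rw [← Finset.mul_prod_erase Finset.univ _ (Finset.mem_univ i), mul_comm (∏ _ ∈ _, _),
    Matrix.updateCol_self]
  congr 2
  exact Finset.prod_congr rfl fun j hj => by rw [Matrix.updateCol_ne (Finset.ne_of_mem_erase hj)]

/-- The polynomial `det (1 + X G)`; its coefficients are the elementary symmetric functions of the
eigenvalues of `G`. -/
noncomputable def fredholmPoly (G : Matrix n n R) : R[X] := (1 + (X : R[X]) • G.map C).det

lemma fredholmPoly_coeff_zero (G : Matrix n n R) : (fredholmPoly G).coeff 0 = 1 := by
  simp [fredholmPoly, Matrix.coeff_det_one_add_X_smul_eq_sum_minors]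

lemma fredholmPoly_eval_one (G : Matrix n n R) : (fredholmPoly G).eval 1 = (1 + G).det := by
  rw [fredholmPoly, ← coe_evalRingHom, RingHom.map_det]
  congr 1
  ext i j
  simp only [RingHom.mapMatrix_apply, Matrix.map_apply, Matrix.add_apply, Matrix.one_apply,
    Matrix.smul_apply, smul_eq_mul, coe_evalRingHom, eval_add, eval_mul, eval_X, eval_C, one_mul]
  split_ifs <;> simp

-- `adj M = det M • M⁻¹`, with the geometric series for `M⁻¹` truncated after `m` terms.
lemma adjugate_one_add_X_smul (G : Matrix n n R) (m : ℕ) :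
    (1 + (X : R[X]) • G.map C).adjugate =
      fredholmPoly G • ∑ k ∈ Finset.range m, (-(X : R[X]) • G.map C) ^ k +
        (1 + (X : R[X]) • G.map C).adjugate * (-(X : R[X]) • G.map C) ^ m := by
  have geom := mul_neg_geom_sum (-(X : R[X]) • G.map C) m
  rw [neg_smul, sub_neg_eq_add, ← neg_smul] at geom
  rw [← sub_eq_iff_eq_add, ← Matrix.one_mul (∑ _ ∈ _, _), ← Matrix.smul_mul, fredholmPoly,
    ← Matrix.adjugate_mul, Matrix.mul_assoc, geom, Matrix.mul_sub, Matrix.mul_one]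

lemma derivative_fredholmPoly (G : Matrix n n R) :
    derivative (fredholmPoly G) = ((1 + (X : R[X]) • G.map C).adjugate * G.map C).trace := by
  rw [fredholmPoly, derivative_det]
  congr 2
  ext1 i j
  simp [Matrix.one_apply, apply_ite derivative]

lemma neg_X_smul_map_C_pow (G : Matrix n n R) (k : ℕ) :
    (-(X : R[X]) • G.map C) ^ k = (C ((-1 : R) ^ k) * X ^ k) • (G ^ k).map C := by
  rw [_root_.smul_pow, neg_pow, Matrix.map_pow, C_pow, C_neg, C_1]

lemma newtonIdentities_fredholmPoly (G : Matrix n n R) :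
    NewtonIdentities (fun k => (G ^ k).trace) (fredholmPoly G).coeff := by
  intro m
  have remainder : ((1 + (X : R[X]) • G.map C).adjugate * (-(X : R[X]) • G.map C) ^ (m + 1) *
      G.map C).trace.coeff m = 0 := by
    simp only [neg_X_smul_map_C_pow, Matrix.mul_smul, Matrix.smul_mul, Matrix.trace_smul,
      smul_eq_mul, mul_assoc, coeff_C_mul, coeff_X_pow_mul', if_neg (Nat.not_succ_le_self m),
      mul_zero]
  rw [mul_comm, ← coeff_derivative, derivative_fredholmPoly, adjugate_one_add_X_smul G (m + 1),
    Matrix.add_mul, Matrix.trace_add, coeff_add, remainder, add_zero, Matrix.smul_mul,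
    Matrix.trace_smul, smul_eq_mul, Matrix.sum_mul, Matrix.trace_sum, Finset.mul_sum,
    finsetSum_coeff]
  refine Finset.sum_congr rfl fun k hk => ?_
  have trace_map : ((G ^ k).map C * G.map C).trace = C (G ^ (k + 1)).trace := by
    rw [AddMonoidHom.map_trace, pow_succ, Matrix.map_mul]
  rw [neg_X_smul_map_C_pow, Matrix.smul_mul, Matrix.trace_smul, trace_map, smul_eq_mul,
    mul_assoc (C _), mul_left_comm, coeff_C_mul, ← mul_assoc (fredholmPoly G), coeff_mul_C,
    coeff_mul_X_pow', if_pos (Finset.mem_range_succ_iff.1 hk), mul_assoc]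

lemma det_plemeljMatrix_trace_pow (G : Matrix n n R) (m : ℕ) :
    (plemeljMatrix (fun k => (G ^ k).trace) m).det = m.factorial * (fredholmPoly G).coeff m :=
  det_plemeljMatrix (fredholmPoly_coeff_zero G) (newtonIdentities_fredholmPoly G) m

end Jacobi

section Gram

variable {𝕜 E ι : Type*} [RCLike 𝕜] [NormedAddCommGroup E] [InnerProductSpace 𝕜 E]
  [Fintype ι]

lemma norm_det_toBasis_le_prod_norm [DecidableEq ι] (e : OrthonormalBasis ι 𝕜 E) (f : ι → E) :
    ‖e.toBasis.det f‖ ≤ ∏ i, ‖f i‖ := by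
  let : LinearOrder ι := LinearOrder.lift' (Fintype.equivFin ι) (Fintype.equivFin ι).injective
  let : LocallyFiniteOrderBot ι := LocallyFiniteOrderBot.ofIic' ι (fun a => {x | x ≤ a}) (by simp)
  have := e.toBasis.finiteDimensional_of_finite
  set b := InnerProductSpace.gramSchmidtOrthonormalBasis
    (Module.finrank_eq_card_basis e.toBasis) f with hb
  have change_basis : e.toBasis.det f = e.toBasis.det b * b.toBasis.det f := by
    rw [e.toBasis.det_apply, ← e.toBasis.toMatrix_mul_toMatrix b.toBasis f, Matrix.det_mul,
      ← e.toBasis.det_apply, ← b.toBasis.det_apply, b.coe_toBasis]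
  rw [change_basis, norm_mul, e.det_to_matrix_orthonormalBasis, one_mul,
    InnerProductSpace.gramSchmidtOrthonormalBasis_det, norm_prod]
  refine Finset.prod_le_prod (fun i _ => norm_nonneg _) fun i _ => ?_
  simpa [← hb] using norm_inner_le_norm (𝕜 := 𝕜) (b i) (f i)

/-- The matrix of inner products of two families; `Matrix.gram` is the case of equal families. -/
def crossGram (𝕜 : Type*) {E m n : Type*} [RCLike 𝕜] [NormedAddCommGroup E]
    [InnerProductSpace 𝕜 E] (v : m → E) (w : n → E) : Matrix m n 𝕜 :=
  Matrix.of fun i j => inner 𝕜 (v i) (w j)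

lemma crossGram_add_left {m n : Type*} (v v' : m → E) (w : n → E) :
    crossGram 𝕜 (v + v') w = crossGram 𝕜 v w + crossGram 𝕜 v' w := by
  ext i j
  simp [crossGram, inner_add_left]

lemma crossGram_eq_conjTranspose_mul {V : Submodule 𝕜 E} (e : OrthonormalBasis ι 𝕜 V)
    (v : ι → V) (w : ι → E) [V.HasOrthogonalProjection] :
    crossGram 𝕜 (fun i => (v i : E)) w =
      (e.toBasis.toMatrix v).conjTranspose *
        e.toBasis.toMatrix fun i => V.orthogonalProjectionOnto (w i) := by
  ext i j
  rw [Matrix.mul_apply]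
  simp only [Matrix.conjTranspose_apply, Module.Basis.toMatrix_apply, e.coe_toBasis_repr_apply,
    e.repr_apply_apply, RCLike.star_def, inner_conj_symm, e.sum_inner_mul_inner]
  rw [crossGram, Matrix.of_apply, Submodule.inner_orthogonalProjectionOnto_eq_of_mem_left]

lemma norm_det_crossGram_le [DecidableEq ι] (v w : ι → E) :
    ‖(crossGram 𝕜 v w).det‖ ≤ ∏ i, ‖v i‖ * ‖w i‖ := by
  by_cases hv : LinearIndependent 𝕜 v
  · let V := Submodule.span 𝕜 (Set.range v)
    have : FiniteDimensional 𝕜 V := FiniteDimensional.span_of_finite 𝕜 (Set.finite_range v)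
    let v' : ι → V := fun i => ⟨v i, Submodule.subset_span (Set.mem_range_self i)⟩
    let e : OrthonormalBasis ι 𝕜 V := (stdOrthonormalBasis 𝕜 V).reindex
      (Fintype.equivOfCardEq (by rw [Fintype.card_fin, finrank_span_eq_card hv]))
    have factor := crossGram_eq_conjTranspose_mul e v' w
    rw [show crossGram 𝕜 v w = _ from factor, Matrix.det_mul, Matrix.det_conjTranspose, norm_mul,
      norm_star, ← e.toBasis.det_apply, ← e.toBasis.det_apply, Finset.prod_mul_distrib]
    gcongr ?_ * ?_
    · exact norm_det_toBasis_le_prod_norm e v'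
    · exact (norm_det_toBasis_le_prod_norm e _).trans
        (Finset.prod_le_prod (fun _ _ => norm_nonneg _)
          fun i _ => V.norm_starProjection_apply_le (w i))
  · obtain ⟨c, hc, i, hi⟩ := Fintype.not_linearIndependent_iff.1 hv
    have dependent : Matrix.vecMul (fun i => star (c i)) (crossGram 𝕜 v w) = 0 := by
      ext j
      have := congrArg (inner 𝕜 · (w j)) hc
      simpa [Matrix.vecMul, dotProduct, crossGram, sum_inner, inner_smul_left] using this
    rw [Matrix.exists_vecMul_eq_zero_iff.1 ⟨_, fun h => hi (star_eq_zero.1 (congrFun h i)),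
      dependent⟩, norm_zero]
    positivity

lemma sum_powersetCard_prod_le_exp (a : ι → ℝ) (ha : ∀ i, 0 ≤ a i) (m : ℕ) :
    ∑ s ∈ Finset.powersetCard m Finset.univ, ∏ i ∈ s, a i ≤ Real.exp (2 * ∑ i, a i) / 2 ^ m := by
  rw [le_div_iff₀ (by positivity), Finset.sum_mul]
  calc ∑ s ∈ Finset.powersetCard m Finset.univ, (∏ i ∈ s, a i) * 2 ^ m
      = ∑ s ∈ Finset.powersetCard m Finset.univ, ∏ i ∈ s, 2 * a i :=
        Finset.sum_congr rfl fun s hs => by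
          rw [Finset.prod_mul_distrib, Finset.prod_const, (Finset.mem_powersetCard.1 hs).2,
            mul_comm]
    _ ≤ ∑ s ∈ Finset.univ.powerset, ∏ i ∈ s, 2 * a i :=
        Finset.sum_le_sum_of_subset_of_nonneg
          (fun s hs => Finset.mem_powerset.2 (Finset.mem_powersetCard.1 hs).1)
          fun s _ _ => Finset.prod_nonneg fun i _ => mul_nonneg zero_le_two (ha i)
    _ = ∏ i, (1 + 2 * a i) := (Finset.prod_one_add _).symm
    _ ≤ ∏ i, Real.exp (2 * a i) := Finset.prod_le_prod
        (fun i _ => by have := ha i; positivity)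
        fun i _ => by rw [add_comm]; exact Real.add_one_le_exp _
    _ = Real.exp (2 * ∑ i, a i) := by rw [← Real.exp_sum, Finset.mul_sum]

lemma norm_coeff_fredholmPoly_crossGram_le [DecidableEq ι] (v w : ι → E) (m : ℕ) :
    ‖(fredholmPoly (crossGram 𝕜 v w)).coeff m‖ ≤ Real.exp (2 * ∑ i, ‖v i‖ * ‖w i‖) / 2 ^ m := by
  rw [fredholmPoly, Matrix.coeff_det_one_add_X_smul_eq_sum_minors]
  refine (norm_sum_le _ _).trans ((Finset.sum_le_sum fun s _ => ?_).trans
    (sum_powersetCard_prod_le_exp _ (fun i => by positivity) m))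
  rw [← Finset.prod_coe_sort]
  exact norm_det_crossGram_le (fun i : s => v i) (fun i : s => w i)

end Gram

section SumRankOne

variable {𝕜 E ι : Type*} [RCLike 𝕜] [NormedAddCommGroup E] [InnerProductSpace 𝕜 E] [Fintype ι]

/-- The finite rank operator `x ↦ ∑ i, ⟪a i, x⟫ • w i`, the form of a partial sum of a nuclear
decomposition. -/
noncomputable def sumRankOne (𝕜 : Type*) {E ι : Type*} [RCLike 𝕜] [NormedAddCommGroup E]
    [InnerProductSpace 𝕜 E] [Fintype ι] (w a : ι → E) : E →L[𝕜] E :=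
  ∑ i, InnerProductSpace.rankOne 𝕜 (w i) (a i)

lemma sumRankOne_apply (w a : ι → E) (x : E) :
    sumRankOne 𝕜 w a x = ∑ i, inner 𝕜 (a i) x • w i := by
  simp [sumRankOne]

lemma mul_sumRankOne (X : E →L[𝕜] E) (w a : ι → E) :
    X * sumRankOne 𝕜 w a = sumRankOne 𝕜 (fun i => X (w i)) a := by
  ext x
  simp [sumRankOne_apply]

lemma sumRankOne_mul [CompleteSpace E] (w a : ι → E) (X : E →L[𝕜] E) :
    sumRankOne 𝕜 w a * X = sumRankOne 𝕜 w fun i => ContinuousLinearMap.adjoint X (a i) := by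
  ext x
  simp [sumRankOne_apply, ContinuousLinearMap.adjoint_inner_left]

lemma sumRankOne_add_right (w a b : ι → E) :
    sumRankOne 𝕜 w (a + b) = sumRankOne 𝕜 w a + sumRankOne 𝕜 w b := by
  ext x
  simp [sumRankOne_apply, inner_add_left, add_smul, Finset.sum_add_distrib]

lemma crossGram_mul_crossGram (a w b x : ι → E) :
    crossGram 𝕜 a w * crossGram 𝕜 b x = crossGram 𝕜 a fun j => sumRankOne 𝕜 w b (x j) := by
  ext i j
  simp [crossGram, Matrix.mul_apply, sumRankOne_apply, inner_sum, inner_smul_right, mul_comm]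

lemma crossGram_pow_succ [DecidableEq ι] (a w : ι → E) (k : ℕ) :
    crossGram 𝕜 a w ^ (k + 1) = crossGram 𝕜 a fun j => (sumRankOne 𝕜 w a ^ k) (w j) := by
  induction k with
  | zero => simp
  | succ k ih =>
    rw [pow_succ', ih, crossGram_mul_crossGram]
    simp only [pow_succ', mul_apply_eq_comp]

lemma det_one_add_crossGram_mul [CompleteSpace E] [DecidableEq ι] (w a b : ι → E) :
    (1 + crossGram 𝕜 (a + b + fun i => ContinuousLinearMap.adjoint (sumRankOne 𝕜 w b) (a i)) w).det
      = (1 + crossGram 𝕜 a w).det * (1 + crossGram 𝕜 b w).det := by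
  have product : crossGram 𝕜 (fun i => ContinuousLinearMap.adjoint (sumRankOne 𝕜 w b) (a i)) w =
      crossGram 𝕜 a w * crossGram 𝕜 b w := by
    rw [crossGram_mul_crossGram]
    ext i j
    simp [crossGram, ContinuousLinearMap.adjoint_inner_left]
  rw [crossGram_add_left, crossGram_add_left, product, ← Matrix.det_mul]
  congr 1
  noncomm_ring

end SumRankOne

section TraceClass

variable {E : Type*} [NormedAddCommGroup E] [InnerProductSpace ℂ E]

namespace TraceDecomp

variable {K A B : E →L[ℂ] E} {u v u' v' : ℕ → E}

lemma hasSum_basis (h : TraceDecomp K u v) {ι : Type*} (b : HilbertBasis ι ℂ E) :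
    HasSum (fun i => ⟪b i, K (b i)⟫_ℂ) (∑' n, ⟪v n, u n⟫_ℂ) := by
  let F : ℕ × ι → ℂ := fun p => ⟪v p.1, b p.2⟫_ℂ * ⟪b p.2, u p.1⟫_ℂ
  have bessel (n : ℕ) (s : Finset ι) : ∑ i ∈ s, ‖F (n, i)‖ ≤ ‖u n‖ * ‖v n‖ := by
    simp only [F, norm_mul]
    refine (Real.sum_mul_le_sqrt_mul_sqrt s _ _).trans ?_
    rw [mul_comm]
    gcongr
    · exact Real.sqrt_le_iff.2 ⟨norm_nonneg _, b.orthonormal.sum_inner_products_le (u n)⟩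
    · refine Real.sqrt_le_iff.2 ⟨norm_nonneg _, ?_⟩
      simp only [norm_inner_symm (v n)]
      exact b.orthonormal.sum_inner_products_le (v n)
  have summable_F : Summable F := by
    refine Summable.of_norm ((summable_prod_of_nonneg fun _ => norm_nonneg _).2
      ⟨fun n => summable_of_sum_le (fun _ => norm_nonneg _) (bessel n), ?_⟩)
    exact Summable.of_nonneg_of_le (fun n => tsum_nonneg fun _ => norm_nonneg _)
      (fun n => tsum_le_of_sum_le' (by positivity) (bessel n)) h.2
  have sum_rows : HasSum (fun n => ⟪v n, u n⟫_ℂ) (∑' p, F p) :=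
    summable_F.hasSum.prod_fiberwise fun n => b.hasSum_inner_mul_inner (v n) (u n)
  rw [sum_rows.tsum_eq]
  refine ((Equiv.prodComm ι ℕ).hasSum_iff.2 summable_F.hasSum).prod_fiberwise fun i => ?_
  simpa [F, inner_smul_right, Function.comp_def] using (h.1 (b i)).mapL (innerSL ℂ (b i))

lemma zero : TraceDecomp (0 : E →L[ℂ] E) 0 0 := by
  simp [TraceDecomp]

lemma rankOne (x y : E) :
    TraceDecomp (InnerProductSpace.rankOne ℂ x y) (Pi.single 0 x) (Pi.single 0 y) := by
  have vanish (n : ℕ) (hn : n ≠ 0) : (Pi.single 0 x : ℕ → E) n = 0 :=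
    Pi.single_eq_of_ne hn _
  refine ⟨fun g => ?_, summable_of_ne_finset_zero (s := {0}) fun n hn => ?_⟩
  · simpa using hasSum_single (f := fun n => ⟪(Pi.single 0 y : ℕ → E) n, g⟫_ℂ •
      (Pi.single 0 x : ℕ → E) n) 0 fun n hn => by rw [vanish n hn, smul_zero]
  · rw [vanish n (by simpa using hn), norm_zero, zero_mul]

lemma add_right (hA : TraceDecomp A u v) (hB : TraceDecomp B u v') :
    TraceDecomp (A + B) u (v + v') := by
  refine ⟨fun g => ?_, Summable.of_nonneg_of_le (fun n => by positivity) (fun n => ?_)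
    (hA.2.add hB.2)⟩
  · simpa [inner_add_left, add_smul] using (hA.1 g).add (hB.1 g)
  · rw [← mul_add]
    gcongr
    exact norm_add_le _ _

lemma mul_left (h : TraceDecomp K u v) (X : E →L[ℂ] E) :
    TraceDecomp (X * K) (fun n => X (u n)) v := by
  refine ⟨fun g => by simpa using (h.1 g).mapL X,
    Summable.of_nonneg_of_le (fun n => by positivity) (fun n => ?_) (h.2.mul_left ‖X‖)⟩
  rw [← mul_assoc]
  gcongr
  exact X.le_opNorm _

lemma of_comp_injective {i : ℕ → ℕ} (hi : Function.Injective i)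
    (h : TraceDecomp K (u ∘ i) (v ∘ i)) (hv : ∀ n ∉ Set.range i, v n = 0) : TraceDecomp K u v :=
  ⟨fun g => (hi.hasSum_iff (f := fun n => ⟪v n, g⟫_ℂ • u n) fun n hn => by
      rw [hv n hn, inner_zero_left, zero_smul]).1 (h.1 g),
    (hi.summable_iff (f := fun n => ‖u n‖ * ‖v n‖) fun n hn => by
      rw [hv n hn, norm_zero, mul_zero]).1 h.2⟩

lemma exists_common_left (hA : TraceDecomp A u v) (hB : TraceDecomp B u' v') :
    ∃ w a b : ℕ → E, TraceDecomp A w a ∧ TraceDecomp B w b ∧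
      ∑' n, ‖w n‖ * ‖a n‖ = ∑' n, ‖u n‖ * ‖v n‖ ∧
      ∑' n, ‖w n‖ * ‖b n‖ = ∑' n, ‖u' n‖ * ‖v' n‖ := by
  let e : ℕ ⊕ ℕ ≃ ℕ := Equiv.natSumNatEquivNat
  let w : ℕ → E := Sum.elim u u' ∘ e.symm
  let a : ℕ → E := Sum.elim v 0 ∘ e.symm
  let b : ℕ → E := Sum.elim 0 v' ∘ e.symm
  have inl_inj : Function.Injective (e ∘ Sum.inl) := e.injective.comp Sum.inl_injective
  have inr_inj : Function.Injective (e ∘ Sum.inr) := e.injective.comp Sum.inr_injective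
  have a_eq_zero (n : ℕ) (hn : n ∉ Set.range (e ∘ Sum.inl)) : a n = 0 := by
    obtain ⟨k | k, rfl⟩ := e.surjective n
    exacts [absurd (Set.mem_range_self k) hn, by simp [a]]
  have b_eq_zero (n : ℕ) (hn : n ∉ Set.range (e ∘ Sum.inr)) : b n = 0 := by
    obtain ⟨k | k, rfl⟩ := e.surjective n
    exacts [by simp [b], absurd (Set.mem_range_self k) hn]
  refine ⟨w, a, b, .of_comp_injective inl_inj ?_ a_eq_zero,
    .of_comp_injective inr_inj ?_ b_eq_zero, ?_, ?_⟩
  · simpa [w, a, Function.comp_def] using hA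
  · simpa [w, b, Function.comp_def] using hB
  · rw [← inl_inj.tsum_eq (Function.support_subset_iff'.2 fun n hn => by
      rw [a_eq_zero n hn, norm_zero, mul_zero])]
    simp [w, a]
  · rw [← inr_inj.tsum_eq (Function.support_subset_iff'.2 fun n hn => by
      rw [b_eq_zero n hn, norm_zero, mul_zero])]
    simp [w, b]

lemma sumRankOne_sub (h : TraceDecomp K u v) (N : ℕ) :
    TraceDecomp (sumRankOne ℂ (fun i : Fin N => u i) (fun i => v i) - K)
      (fun n => -u (n + N)) fun n => v (n + N) := by
  refine ⟨fun g => ?_, by simpa using (summable_nat_add_iff N).2 h.2⟩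
  have tail := ((hasSum_nat_add_iff' (f := fun n => ⟪v n, g⟫_ℂ • u n) N).2 (h.1 g)).neg
  rw [neg_sub, Finset.sum_range] at tail
  simpa [sumRankOne_apply] using tail

lemma norm_le (h : TraceDecomp K u v) : ‖K‖ ≤ ∑' n, ‖u n‖ * ‖v n‖ := by
  refine K.opNorm_le_bound (tsum_nonneg fun n => by positivity) fun g => ?_
  rw [← (h.1 g).tsum_eq, ← tsum_mul_right]
  refine tsum_of_norm_bounded (h.2.mul_right ‖g‖).hasSum fun n => ?_
  rw [norm_smul, mul_comm ‖u n‖, mul_right_comm]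
  gcongr
  exact norm_inner_le_norm _ _

lemma traceNorm_le (h : TraceDecomp K u v) : traceNorm K ≤ ∑' n, ‖u n‖ * ‖v n‖ := by
  refine csInf_le ⟨0, ?_⟩ ⟨u, v, h, rfl⟩
  rintro _ ⟨u', v', -, rfl⟩
  exact tsum_nonneg fun n => by positivity

end TraceDecomp

lemma traceNorm_nonneg (K : E →L[ℂ] E) : 0 ≤ traceNorm K := by
  refine Real.sInf_nonneg ?_
  rintro _ ⟨u, v, -, rfl⟩
  exact tsum_nonneg fun n => by positivity

namespace IsTraceClass

variable {K A B : E →L[ℂ] E}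

lemma exists_tsum_lt (hK : IsTraceClass K) {S : ℝ} (hS : traceNorm K < S) :
    ∃ u v, TraceDecomp K u v ∧ ∑' n, ‖u n‖ * ‖v n‖ < S := by
  obtain ⟨u, v, h⟩ := hK
  have nonempty : {M : ℝ | ∃ u v, TraceDecomp K u v ∧ ∑' n, ‖u n‖ * ‖v n‖ = M}.Nonempty :=
    ⟨_, u, v, h, rfl⟩
  obtain ⟨_, ⟨u', v', h', rfl⟩, hlt⟩ := exists_lt_of_csInf_lt nonempty hS
  exact ⟨u', v', h', hlt⟩

lemma le_mul_traceNorm (hK : IsTraceClass K) {a c : ℝ} (hc : 0 ≤ c)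
    (h : ∀ u v, TraceDecomp K u v → a ≤ c * ∑' n, ‖u n‖ * ‖v n‖) : a ≤ c * traceNorm K := by
  obtain ⟨u, v, hK⟩ := hK
  rw [traceNorm, ← smul_eq_mul, ← Real.sInf_smul_of_nonneg hc]
  refine le_csInf ⟨_, _, ⟨u, v, hK, rfl⟩, rfl⟩ ?_
  rintro _ ⟨_, ⟨u, v, hK, rfl⟩, rfl⟩
  exact h u v hK

lemma norm_le_traceNorm (hK : IsTraceClass K) : ‖K‖ ≤ traceNorm K := by
  simpa using hK.le_mul_traceNorm zero_le_one fun u v h => by simpa using h.norm_le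

protected lemma add (hA : IsTraceClass A) (hB : IsTraceClass B) : IsTraceClass (A + B) := by
  obtain ⟨u, v, hA⟩ := hA
  obtain ⟨u', v', hB⟩ := hB
  obtain ⟨w, a, b, hA, hB, -⟩ := hA.exists_common_left hB
  exact ⟨w, a + b, hA.add_right hB⟩

protected lemma zero : IsTraceClass (0 : E →L[ℂ] E) := ⟨_, _, TraceDecomp.zero⟩

protected lemma sum {ι : Type*} {s : Finset ι} {F : ι → E →L[ℂ] E}
    (h : ∀ i ∈ s, IsTraceClass (F i)) : IsTraceClass (∑ i ∈ s, F i) :=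
  Finset.sum_induction _ _ (fun _ _ => IsTraceClass.add) IsTraceClass.zero h

protected lemma mul_left (hK : IsTraceClass K) (X : E →L[ℂ] E) : IsTraceClass (X * K) := by
  obtain ⟨u, v, h⟩ := hK
  exact ⟨_, _, h.mul_left X⟩

lemma traceNorm_add_le (hA : IsTraceClass A) (hB : IsTraceClass B) :
    traceNorm (A + B) ≤ traceNorm A + traceNorm B := by
  suffices traceNorm (A + B) - traceNorm A ≤ 1 * traceNorm B by linarith
  refine hB.le_mul_traceNorm zero_le_one fun u' v' hB => ?_
  suffices traceNorm (A + B) - ∑' n, ‖u' n‖ * ‖v' n‖ ≤ 1 * traceNorm A by linarith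
  refine hA.le_mul_traceNorm zero_le_one fun u v hA => ?_
  obtain ⟨w, a, b, hA, hB, sum_a, sum_b⟩ := hA.exists_common_left hB
  suffices traceNorm (A + B) ≤ ∑' n, ‖w n‖ * ‖a n‖ + ∑' n, ‖w n‖ * ‖b n‖ by linarith
  refine (hA.add_right hB).traceNorm_le.trans ?_
  rw [← hA.2.tsum_add hB.2]
  refine (hA.add_right hB).2.tsum_le_tsum (fun n => ?_) (hA.2.add hB.2)
  rw [← mul_add]
  gcongr
  exact norm_add_le _ _

lemma traceNorm_mul_left_le (hK : IsTraceClass K) (X : E →L[ℂ] E) :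
    traceNorm (X * K) ≤ ‖X‖ * traceNorm K := by
  refine hK.le_mul_traceNorm (norm_nonneg X) fun u v h => (h.mul_left X).traceNorm_le.trans ?_
  rw [← tsum_mul_left]
  refine (h.mul_left X).2.tsum_le_tsum (fun n => ?_) (h.2.mul_left _)
  rw [← mul_assoc]
  gcongr
  exact X.le_opNorm _

lemma hasSum_basis (hK : IsTraceClass K) {ι : Type*} (b : HilbertBasis ι ℂ E) :
    HasSum (fun i => ⟪b i, K (b i)⟫_ℂ) (opTrace K) := by
  rw [opTrace, dif_pos hK]
  exact hK.choose_spec.choose_spec.hasSum_basis b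

end IsTraceClass

lemma isTraceClass_sumRankOne {ι : Type*} [Fintype ι] (w a : ι → E) :
    IsTraceClass (sumRankOne ℂ w a) :=
  IsTraceClass.sum fun i _ => ⟨_, _, TraceDecomp.rankOne (w i) (a i)⟩

end TraceClass

section Trace

variable {K A B : H →L[ℂ] H} {u v : ℕ → H}

lemma TraceDecomp.mul_right (h : TraceDecomp K u v) (X : H →L[ℂ] H) :
    TraceDecomp (K * X) u fun n => ContinuousLinearMap.adjoint X (v n) := by
  refine ⟨fun g => ?_,
    Summable.of_nonneg_of_le (fun n => by positivity) (fun n => ?_) (h.2.mul_right ‖X‖)⟩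
  · simpa [ContinuousLinearMap.adjoint_inner_left] using h.1 (X g)
  · rw [mul_assoc, mul_comm ‖v n‖]
    gcongr
    simpa using (ContinuousLinearMap.adjoint X).le_opNorm (v n)

protected lemma IsTraceClass.mul_right (hK : IsTraceClass K) (X : H →L[ℂ] H) :
    IsTraceClass (K * X) := by
  obtain ⟨u, v, h⟩ := hK
  exact ⟨_, _, h.mul_right X⟩

lemma IsTraceClass.traceNorm_mul_right_le (hK : IsTraceClass K) (X : H →L[ℂ] H) :
    traceNorm (K * X) ≤ ‖X‖ * traceNorm K := by
  refine hK.le_mul_traceNorm (norm_nonneg X) fun u v h => (h.mul_right X).traceNorm_le.trans ?_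
  rw [← tsum_mul_left]
  refine (h.mul_right X).2.tsum_le_tsum (fun n => ?_) (h.2.mul_left _)
  rw [mul_left_comm]
  gcongr
  simpa using (ContinuousLinearMap.adjoint X).le_opNorm (v n)

lemma TraceDecomp.opTrace_eq (h : TraceDecomp K u v) : opTrace K = ∑' n, ⟪v n, u n⟫_ℂ := by
  obtain ⟨_, b, -⟩ := exists_hilbertBasis ℂ H
  exact (IsTraceClass.hasSum_basis ⟨u, v, h⟩ b).unique (h.hasSum_basis b)

lemma IsTraceClass.opTrace_add (hA : IsTraceClass A) (hB : IsTraceClass B) :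
    opTrace (A + B) = opTrace A + opTrace B := by
  obtain ⟨_, b, -⟩ := exists_hilbertBasis ℂ H
  refine ((hA.add hB).hasSum_basis b).unique ?_
  simpa [inner_add_right] using (hA.hasSum_basis b).add (hB.hasSum_basis b)

lemma IsTraceClass.opTrace_mul_comm (hK : IsTraceClass K) (X : H →L[ℂ] H) :
    opTrace (X * K) = opTrace (K * X) := by
  obtain ⟨u, v, h⟩ := hK
  rw [(h.mul_left X).opTrace_eq, (h.mul_right X).opTrace_eq]
  simp only [ContinuousLinearMap.adjoint_inner_left]

lemma IsTraceClass.norm_opTrace_le (hK : IsTraceClass K) : ‖opTrace K‖ ≤ traceNorm K := by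
  suffices ‖opTrace K‖ ≤ 1 * traceNorm K by rwa [one_mul] at this
  refine hK.le_mul_traceNorm zero_le_one fun u v h => ?_
  rw [h.opTrace_eq, one_mul]
  refine tsum_of_norm_bounded h.2.hasSum fun n => ?_
  rw [mul_comm]
  exact norm_inner_le_norm _ _

lemma opTrace_sumRankOne {ι : Type*} [Fintype ι] (w a : ι → H) :
    opTrace (sumRankOne ℂ w a) = (crossGram ℂ a w).trace := by
  obtain ⟨_, b, -⟩ := exists_hilbertBasis ℂ H
  refine ((isTraceClass_sumRankOne w a).hasSum_basis b).unique ?_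
  simpa [sumRankOne_apply, inner_sum, inner_smul_right, crossGram, Matrix.trace] using
    hasSum_sum (s := Finset.univ) fun i _ => b.hasSum_inner_mul_inner (a i) (w i)

end Trace

section TraceTendsto

open Filter Topology

variable {α E : Type*} [NormedAddCommGroup E] [InnerProductSpace ℂ E] {l : Filter α}

/-- Convergence in trace norm, for operators `X i` that differ from `A` by trace class ones. -/
def TraceTendsto (X : α → E →L[ℂ] E) (l : Filter α) (A : E →L[ℂ] E) : Prop :=
  (∀ i, IsTraceClass (X i - A)) ∧ Tendsto (fun i => traceNorm (X i - A)) l (𝓝 0)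

lemma TraceDecomp.traceTendsto {K : E →L[ℂ] E} {u v : ℕ → E} (h : TraceDecomp K u v) :
    TraceTendsto (fun N => sumRankOne ℂ (fun i : Fin N => u i) fun i => v i) atTop K := by
  refine ⟨fun N => ⟨_, _, h.sumRankOne_sub N⟩, squeeze_zero (fun _ => traceNorm_nonneg _)
    (fun N => (h.sumRankOne_sub N).traceNorm_le) ?_⟩
  simpa using tendsto_sum_nat_add fun n => ‖u n‖ * ‖v n‖

namespace TraceTendsto

section

variable {X Y : α → E →L[ℂ] E} {A B : E →L[ℂ] E}

protected lemma add (hX : TraceTendsto X l A) (hY : TraceTendsto Y l B) :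
    TraceTendsto (fun i => X i + Y i) l (A + B) := by
  have sub_eq (i : α) : X i + Y i - (A + B) = (X i - A) + (Y i - B) := add_sub_add_comm _ _ _ _
  simp only [TraceTendsto, sub_eq]
  refine ⟨fun i => (hX.1 i).add (hY.1 i), squeeze_zero (fun _ => traceNorm_nonneg _)
    (fun i => (hX.1 i).traceNorm_add_le (hY.1 i)) ?_⟩
  simpa using hX.2.add hY.2

lemma isTraceClass (hX : TraceTendsto X l A) (hA : IsTraceClass A) (i : α) :
    IsTraceClass (X i) := by
  simpa using (hX.1 i).add hA

lemma eventually_traceNorm_lt (hX : TraceTendsto X l A) (hA : IsTraceClass A) {S : ℝ}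
    (hS : traceNorm A < S) : ∀ᶠ i in l, traceNorm (X i) < S := by
  filter_upwards [hX.2.eventually_lt_const (sub_pos.2 hS)] with i hi
  calc traceNorm (X i) = traceNorm (X i - A + A) := by rw [sub_add_cancel]
    _ ≤ traceNorm (X i - A) + traceNorm A := (hX.1 i).traceNorm_add_le hA
    _ < S := by linarith

end

variable {X Y : α → H →L[ℂ] H} {A B : H →L[ℂ] H}

protected lemma mul (hX : TraceTendsto X l A) (hY : TraceTendsto Y l B) :
    TraceTendsto (fun i => X i * Y i) l (A * B) := by
  have sub_eq (i : α) :
      X i * Y i - A * B = (X i - A) * (Y i - B) + (A * (Y i - B) + (X i - A) * B) := by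
    noncomm_ring
  have trace_class (i : α) := ((hY.1 i).mul_left A).add ((hX.1 i).mul_right B)
  simp only [TraceTendsto, sub_eq]
  refine ⟨fun i => ((hY.1 i).mul_left _).add (trace_class i),
    squeeze_zero (fun _ => traceNorm_nonneg _) (g := fun i => traceNorm (X i - A) *
      traceNorm (Y i - B) + (‖A‖ * traceNorm (Y i - B) + ‖B‖ * traceNorm (X i - A)))
      (fun i => ?_) ?_⟩
  · refine (((hY.1 i).mul_left _).traceNorm_add_le (trace_class i)).trans (add_le_add ?_ ?_)
    · refine ((hY.1 i).traceNorm_mul_left_le _).trans ?_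
      gcongr
      exacts [traceNorm_nonneg _, (hX.1 i).norm_le_traceNorm]
    · exact (((hY.1 i).mul_left A).traceNorm_add_le ((hX.1 i).mul_right B)).trans
        (add_le_add ((hY.1 i).traceNorm_mul_left_le A) ((hX.1 i).traceNorm_mul_right_le B))
  · simpa using (hX.2.mul hY.2).add ((hY.2.const_mul ‖A‖).add (hX.2.const_mul ‖B‖))

protected lemma pow_succ (hX : TraceTendsto X l A) (k : ℕ) :
    TraceTendsto (fun i => X i ^ (k + 1)) l (A ^ (k + 1)) := by
  induction k with
  | zero => simpa using hX
  | succ k ih => simpa only [pow_succ _ (k + 1)] using ih.mul hX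

lemma tendsto_opTrace (hX : TraceTendsto X l A) (hA : IsTraceClass A) :
    Tendsto (fun i => opTrace (X i)) l (𝓝 (opTrace A)) := by
  have split (i : α) : opTrace (X i) = opTrace (X i - A) + opTrace A := by
    rw [← (hX.1 i).opTrace_add hA, sub_add_cancel]
  simp only [split]
  simpa using (squeeze_zero_norm (fun i => (hX.1 i).norm_opTrace_le) hX.2).add_const
    (opTrace A)

end TraceTendsto

end TraceTendsto

section FredholmDet

open Filter Topology

variable {K A B : H →L[ℂ] H}

lemma plemeljCoeff_eq_det {E : Type*} [NormedAddCommGroup E] [InnerProductSpace ℂ E]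
    (K : E →L[ℂ] E) (m : ℕ) :
    plemeljCoeff K m = (plemeljMatrix (fun k => opTrace (K ^ k)) m).det := rfl

lemma opTrace_sumRankOne_pow_succ {ι : Type*} [Fintype ι] [DecidableEq ι] (w a : ι → H) (k : ℕ) :
    opTrace (sumRankOne ℂ w a ^ (k + 1)) = (crossGram ℂ a w ^ (k + 1)).trace := by
  rw [pow_succ, mul_sumRankOne, opTrace_sumRankOne, crossGram_pow_succ]

lemma plemeljCoeff_sumRankOne {ι : Type*} [Fintype ι] [DecidableEq ι] (w a : ι → H) (m : ℕ) :
    plemeljCoeff (sumRankOne ℂ w a) m / m.factorial =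
      (fredholmPoly (crossGram ℂ a w)).coeff m := by
  rw [plemeljCoeff_eq_det, plemeljMatrix_congr (σ := fun k => opTrace (_ ^ k))
      (τ := fun k => (crossGram ℂ a w ^ k).trace) (opTrace_sumRankOne_pow_succ w a),
    det_plemeljMatrix_trace_pow,
    mul_div_cancel_left₀ _ (Nat.cast_ne_zero.2 m.factorial_ne_zero)]

lemma fredholmDet_sumRankOne {ι : Type*} [Fintype ι] [DecidableEq ι] (w a : ι → H) :
    fredholmDet (sumRankOne ℂ w a) = (1 + crossGram ℂ a w).det := by
  simp only [fredholmDet, plemeljCoeff_sumRankOne]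
  rw [← fredholmPoly_eval_one, Polynomial.eval_eq_sum_range]
  simp only [one_pow, mul_one]
  exact tsum_eq_sum fun m hm => Polynomial.coeff_eq_zero_of_natDegree_lt (by simpa using hm)

lemma TraceTendsto.tendsto_plemeljCoeff {α : Type*} {l : Filter α} {X : α → H →L[ℂ] H}
    (hX : TraceTendsto X l K) (hK : IsTraceClass K) (m : ℕ) :
    Tendsto (fun i => plemeljCoeff (X i) m) l (𝓝 (plemeljCoeff K m)) :=
  tendsto_det_plemeljMatrix (σ := fun i k => opTrace (X i ^ k)) (τ := fun k => opTrace (K ^ k))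
    (fun k => (hX.pow_succ k).tendsto_opTrace (by rw [pow_succ]; exact hK.mul_left _)) m

lemma TraceDecomp.norm_plemeljCoeff_div_factorial_le {u v : ℕ → H} (h : TraceDecomp K u v)
    (m : ℕ) : ‖plemeljCoeff K m / m.factorial‖ ≤
      Real.exp (2 * ∑' n, ‖u n‖ * ‖v n‖) / 2 ^ m := by
  refine le_of_tendsto' ((h.traceTendsto.tendsto_plemeljCoeff ⟨u, v, h⟩ m).div_const _).norm
    fun N => ?_
  rw [plemeljCoeff_sumRankOne]
  refine (norm_coeff_fredholmPoly_crossGram_le _ _ m).trans ?_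
  simp only [mul_comm ‖v _‖]
  gcongr
  rw [← Finset.sum_range fun n => ‖u n‖ * ‖v n‖]
  exact h.2.sum_le_tsum _ fun _ _ => by positivity

lemma IsTraceClass.norm_plemeljCoeff_div_factorial_le (hK : IsTraceClass K) {S : ℝ}
    (hS : traceNorm K < S) (m : ℕ) :
    ‖plemeljCoeff K m / m.factorial‖ ≤ Real.exp (2 * S) / 2 ^ m := by
  obtain ⟨u, v, h, hlt⟩ := hK.exists_tsum_lt hS
  refine (h.norm_plemeljCoeff_div_factorial_le m).trans ?_
  gcongr

lemma TraceTendsto.tendsto_fredholmDet {α : Type*} {l : Filter α} {X : α → H →L[ℂ] H}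
    (hX : TraceTendsto X l K) (hK : IsTraceClass K) :
    Tendsto (fun i => fredholmDet (X i)) l (𝓝 (fredholmDet K)) := by
  refine tendsto_tsum_of_dominated_convergence
    (bound := fun m => Real.exp (2 * (traceNorm K + 1)) / 2 ^ m) ?_
    (fun m => (hX.tendsto_plemeljCoeff hK m).div_const _) ?_
  · simpa [div_eq_mul_inv] using summable_geometric_two.mul_left _
  · filter_upwards [hX.eventually_traceNorm_lt hK (lt_add_one _)] with i hi m
    exact (hX.isTraceClass hK i).norm_plemeljCoeff_div_factorial_le hi m

lemma fredholmDet_sumRankOne_add_add_mul {ι : Type*} [Fintype ι] (w a b : ι → H) :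
    fredholmDet (sumRankOne ℂ w a + sumRankOne ℂ w b + sumRankOne ℂ w a * sumRankOne ℂ w b) =
      fredholmDet (sumRankOne ℂ w a) * fredholmDet (sumRankOne ℂ w b) := by
  rw [sumRankOne_mul, ← sumRankOne_add_right, ← sumRankOne_add_right]
  simp only [fredholmDet_sumRankOne, det_one_add_crossGram_mul]

lemma IsTraceClass.fredholmDet_add_add_mul (hA : IsTraceClass A) (hB : IsTraceClass B) :
    fredholmDet (A + B + A * B) = fredholmDet A * fredholmDet B := by
  have hAB : IsTraceClass (A + B + A * B) := (hA.add hB).add (hB.mul_left A)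
  obtain ⟨u, v, decompA⟩ := id hA
  obtain ⟨u', v', decompB⟩ := id hB
  obtain ⟨w, a, b, decompA, decompB, -⟩ := decompA.exists_common_left decompB
  have limA := decompA.traceTendsto
  have limB := decompB.traceTendsto
  refine tendsto_nhds_unique (((limA.add limB).add (limA.mul limB)).tendsto_fredholmDet hAB) ?_
  simp only [fredholmDet_sumRankOne_add_add_mul]
  exact (limA.tendsto_fredholmDet hA).mul (limB.tendsto_fredholmDet hB)

lemma IsTraceClass.fredholmDet_mul_comm (hK : IsTraceClass K) (X : H →L[ℂ] H) :
    fredholmDet (X * K) = fredholmDet (K * X) := by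
  have trace_pow (k : ℕ) : opTrace ((X * K) ^ (k + 1)) = opTrace ((K * X) ^ (k + 1)) := by
    rw [pow_succ', mul_assoc, ← mul_pow_mul, (hK.mul_left _).opTrace_mul_comm, pow_succ,
      mul_assoc]
  refine tsum_congr fun m => ?_
  rw [plemeljCoeff_eq_det, plemeljCoeff_eq_det, plemeljMatrix_congr
    (σ := fun k => opTrace ((X * K) ^ k)) (τ := fun k => opTrace ((K * X) ^ k)) trace_pow]

end FredholmDet

lemma IsTraceClass.fredholmDet_mul_mul_of_isIdempotentElem {K P : H →L[ℂ] H} (hK : IsTraceClass K)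
    (hP : IsIdempotentElem P) : fredholmDet (P * K * P) = fredholmDet (K * P) := by
  rw [mul_assoc, (hK.mul_right P).fredholmDet_mul_comm, mul_assoc, hP]

theorem jacobi_dodgson_general (K P : H →L[ℂ] H) (hK : IsTraceClass K) (hinv : IsUnit (1 + K))
    (hP : IsIdempotentElem P) :
    fredholmDet (P * K * P) =
      fredholmDet K *
        fredholmDet ((1 - P) * (Ring.inverse (1 + K) - 1) * (1 - P)) := by
  set R := Ring.inverse (1 + K) - 1 with hR
  have left_inv : (1 + R) * (1 + K) = 1 := by
    rw [hR, add_sub_cancel, Ring.inverse_mul_cancel _ hinv]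
  have right_inv : (1 + K) * (1 + R) = 1 := by
    rw [hR, add_sub_cancel, Ring.mul_inverse_cancel _ hinv]
  have hR_trace : IsTraceClass R := by
    have : R = -(1 + R) * K := by
      calc R = (1 + R) * (1 + K) - 1 + -(1 + R) * K := by noncomm_ring
        _ = -(1 + R) * K := by rw [left_inv, sub_self, zero_add]
    rw [this]
    exact hK.mul_left _
  have factorization : K + R * (1 - P) + K * (R * (1 - P)) = K * P := by
    calc K + R * (1 - P) + K * (R * (1 - P))
        = ((1 + K) * (1 + R)) * (1 - P) + (1 + K) * P - 1 := by noncomm_ring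
      _ = K * P := by rw [right_inv]; noncomm_ring
  calc fredholmDet (P * K * P)
      = fredholmDet (K * P) := hK.fredholmDet_mul_mul_of_isIdempotentElem hP
    _ = fredholmDet K * fredholmDet (R * (1 - P)) := by
      rw [← hK.fredholmDet_add_add_mul (hR_trace.mul_right _), factorization]
    _ = fredholmDet K * fredholmDet ((1 - P) * R * (1 - P)) := by
      rw [hR_trace.fredholmDet_mul_mul_of_isIdempotentElem hP.one_sub]

/-- Jacobi–Dodgson identity: for trace class `K` with `I + K` invertible and
an orthogonal projection `P` with complement `Q = I - P`,
`det(P(I+K)P) = det(I+K) · det(Q(I+K)⁻¹Q)`, where the determinant of `P(I+K)P` on the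
range of `P` equals `det(I + PKP)`, and that of `Q(I+K)⁻¹Q` on the range of `Q` equals
`det(I + Q((I+K)⁻¹ - I)Q)`. -/
theorem jacobi_dodgson (K P : H →L[ℂ] H)
    (hK : IsTraceClass K) (hinv : IsUnit (1 + K))
    (hPsa : IsSelfAdjoint P) (hPidem : P * P = P) :
    fredholmDet (P * K * P) =
      fredholmDet K *
        fredholmDet ((1 - P) * (Ring.inverse (1 + K) - 1) * (1 - P)) := by
  exact jacobi_dodgson_general K P hK hinv hPidem
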